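/- Let a, b, c, d be four points in the hyperbolic plane such that the geodesic segments [a,b] and [c,d] are non-degenerate and disjoint. Then the function p ↦ dist(p, [c,d])² is strictly convex along [a,b]; i.e., for the arc-length parameterization α of [a,b], t ↦ dist(α(t), [c,d])² has positive second difference quotients. -/

import Mathlib

/-! Statement 0: For disjoint non-degenerate geodesic segments [a,b] and [c,d] in the
hyperbolic plane, p ↦ dist(p,[c,d])² is strictly convex along [a,b]. -/

open Metric Set

local notation "ℍ" => UpperHalfPlane

/-- A unit-speed (arc-length) geodesic parameterization on a set of times. -/
def IsUnitSpeedGeodesicOn (α : ℝ → ℍ) (I : Set ℝ) : Prop :=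
  ∀ s ∈ I, ∀ t ∈ I, dist (α s) (α t) = |s - t|

/-! ### The hyperboloid model -/

/-- A Lorentzian form of signature `(1, 2)` on `ℝ³`. -/
noncomputable def lorentz (v w : Fin 3 → ℝ) : ℝ := (v 0 * w 2 + v 2 * w 0) / 2 - v 1 * w 1

/-- The embedding of the upper half-plane as a sheet of the hyperboloid `lorentz v v = 1`. -/
noncomputable def toHyperboloid (z : ℍ) : Fin 3 → ℝ :=
  ![1 / z.im, z.re / z.im, (z.re ^ 2 + z.im ^ 2) / z.im]

lemma lorentz_comm (v w : Fin 3 → ℝ) : lorentz v w = lorentz w v := by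
  simp only [lorentz]; ring

lemma lorentz_add_left (u v w : Fin 3 → ℝ) :
    lorentz (u + v) w = lorentz u w + lorentz v w := by
  simp only [lorentz, Pi.add_apply]; ring

lemma lorentz_sub_left (u v w : Fin 3 → ℝ) :
    lorentz (u - v) w = lorentz u w - lorentz v w := by
  simp only [lorentz, Pi.sub_apply]; ring

lemma lorentz_smul_left (k : ℝ) (v w : Fin 3 → ℝ) :
    lorentz (k • v) w = k * lorentz v w := by
  simp only [lorentz, Pi.smul_apply, smul_eq_mul]; ring

lemma lorentz_add_right (u v w : Fin 3 → ℝ) :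
    lorentz w (u + v) = lorentz w u + lorentz w v := by
  simp only [lorentz, Pi.add_apply]; ring

lemma lorentz_sub_right (u v w : Fin 3 → ℝ) :
    lorentz w (u - v) = lorentz w u - lorentz w v := by
  simp only [lorentz, Pi.sub_apply]; ring

lemma lorentz_smul_right (k : ℝ) (v w : Fin 3 → ℝ) :
    lorentz w (k • v) = k * lorentz w v := by
  simp only [lorentz, Pi.smul_apply, smul_eq_mul]; ring

/-- Gram determinants for a form of signature `(1, 2)` are nonnegative. -/
lemma lorentz_gram_nonneg (u v w : Fin 3 → ℝ) :
    0 ≤ lorentz u u * lorentz v v * lorentz w w + 2 * lorentz u v * lorentz v w * lorentz u w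
      - lorentz u u * lorentz v w ^ 2 - lorentz v v * lorentz u w ^ 2
      - lorentz w w * lorentz u v ^ 2 := by
  have h : lorentz u u * lorentz v v * lorentz w w
      + 2 * lorentz u v * lorentz v w * lorentz u w
      - lorentz u u * lorentz v w ^ 2 - lorentz v v * lorentz u w ^ 2
      - lorentz w w * lorentz u v ^ 2
      = ((u 0 * (v 1 * w 2 - v 2 * w 1) - u 1 * (v 0 * w 2 - v 2 * w 0)
        + u 2 * (v 0 * w 1 - v 1 * w 0)) / 2) ^ 2 := by
    simp only [lorentz]; ring
  rw [h]
  positivity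

/-- A null vector orthogonal to a unit timelike vector vanishes. -/
lemma eq_zero_of_lorentz_eq_zero {p v : Fin 3 → ℝ} (hp : lorentz p p = 1)
    (hpv : lorentz p v = 0) (hv : lorentz v v = 0) : v = 0 := by
  have key : ∀ e, lorentz v e = 0 := by
    intro e
    have h := lorentz_gram_nonneg p v e
    rw [hp, hpv, hv] at h
    nlinarith [sq_nonneg (lorentz v e)]
  have h0 := key ![1, 0, 0]
  have h1 := key ![0, 1, 0]
  have h2 := key ![0, 0, 1]
  simp [lorentz] at h0 h1 h2
  ext i
  fin_cases i <;> simpa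

lemma lorentz_toHyperboloid (z w : ℍ) :
    lorentz (toHyperboloid z) (toHyperboloid w) = Real.cosh (dist z w) := by
  have hz := z.im_pos
  have hw := w.im_pos
  rw [UpperHalfPlane.cosh_dist']
  simp [lorentz, toHyperboloid]
  field_simp
  ring

lemma lorentz_toHyperboloid_self (z : ℍ) :
    lorentz (toHyperboloid z) (toHyperboloid z) = 1 := by
  simp [lorentz_toHyperboloid]

/-- Unit-speed geodesics are hyperbolic rotations in the hyperboloid model. -/
lemma IsUnitSpeedGeodesicOn.exists_velocity {α : ℝ → ℍ} {T : ℝ} (hT : 0 < T)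
    (hα : IsUnitSpeedGeodesicOn α (Icc 0 T)) (t₀ : ℝ) (ht₀ : t₀ ∈ Icc 0 T) :
    ∃ U : Fin 3 → ℝ, lorentz (toHyperboloid (α t₀)) U = 0 ∧ lorentz U U = -1 ∧
      ∀ t ∈ Icc 0 T, toHyperboloid (α t) =
        Real.cosh (t - t₀) • toHyperboloid (α t₀) + Real.sinh (t - t₀) • U := by
  have hL : ∀ s ∈ Icc 0 T, ∀ t ∈ Icc 0 T,
      lorentz (toHyperboloid (α s)) (toHyperboloid (α t)) = Real.cosh (s - t) := by
    intro s hs t ht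
    rw [lorentz_toHyperboloid, hα s hs t ht, Real.cosh_abs]
  have h0 : (0 : ℝ) ∈ Icc 0 T := ⟨le_rfl, hT.le⟩
  have h1 : T ∈ Icc 0 T := ⟨hT.le, le_rfl⟩
  have hsT : Real.sinh T ≠ 0 := (Real.sinh_pos_iff.2 hT).ne'
  have hcT := Real.cosh_sq T
  set P := toHyperboloid (α 0) with hP
  set Q := toHyperboloid (α T) with hQ
  set N := (Real.sinh T)⁻¹ • (Q - Real.cosh T • P) with hN
  have hPP : lorentz P P = 1 := lorentz_toHyperboloid_self _
  have hQQ : lorentz Q Q = 1 := lorentz_toHyperboloid_self _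
  have hPQ : lorentz P Q = Real.cosh T := by simpa using hL 0 h0 T h1
  have hQP : lorentz Q P = Real.cosh T := by simpa using hL T h1 0 h0
  have hPN : lorentz P N = 0 := by
    simp [hN, lorentz_sub_right, lorentz_smul_right, hPP, hPQ]
  have hNN : lorentz N N = -1 := by
    simp only [hN, lorentz_sub_right, lorentz_smul_right, lorentz_sub_left, lorentz_smul_left,
      hPP, hPQ, hQQ, hQP]
    field_simp
    linear_combination -hcT
  have hrep : ∀ t ∈ Icc 0 T,
      toHyperboloid (α t) = Real.cosh t • P + Real.sinh t • N := by
    intro t ht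
    set X := toHyperboloid (α t) with hX
    have hXX : lorentz X X = 1 := lorentz_toHyperboloid_self _
    have hXP : lorentz X P = Real.cosh t := by simpa using hL t ht 0 h0
    have hPX : lorentz P X = Real.cosh t := by rw [lorentz_comm, hXP]
    have hXQ : lorentz X Q = Real.cosh t * Real.cosh T - Real.sinh t * Real.sinh T := by
      rw [hL t ht T h1, Real.cosh_sub]
    have hXN : lorentz X N = -Real.sinh t := by
      simp only [hN, lorentz_sub_right, lorentz_smul_right, hXQ, hXP]
      field_simp
      ring
    have hNX : lorentz N X = -Real.sinh t := by rw [lorentz_comm, hXN]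
    have hNP : lorentz N P = 0 := by rw [lorentz_comm, hPN]
    have hct := Real.cosh_sq t
    have hz : X - (Real.cosh t • P + Real.sinh t • N) = 0 := by
      apply eq_zero_of_lorentz_eq_zero hPP
      · simp [lorentz_sub_right, lorentz_add_right, lorentz_smul_right, hPX, hPP, hPN]
      · simp only [lorentz_sub_right, lorentz_add_right, lorentz_smul_right, lorentz_sub_left,
          lorentz_add_left, lorentz_smul_left, hXX, hXP, hPX, hPP, hPN, hNP, hXN, hNX, hNN]
        linear_combination -hct
    exact sub_eq_zero.1 hz
  have hNP : lorentz N P = 0 := by rw [lorentz_comm, hPN]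
  have hct := Real.cosh_sq t₀
  refine ⟨Real.sinh t₀ • P + Real.cosh t₀ • N, ?_, ?_, ?_⟩
  · rw [hrep t₀ ht₀]
    simp only [lorentz_add_right, lorentz_smul_right, lorentz_add_left, lorentz_smul_left, hPP,
      hPN, hNP, hNN]
    ring
  · simp only [lorentz_add_right, lorentz_smul_right, lorentz_add_left, lorentz_smul_left, hPP,
      hPN, hNP, hNN]
    linear_combination -hct
  · intro t ht
    rw [hrep t ht, hrep t₀ ht₀, Real.cosh_sub, Real.sinh_sub]
    ext i
    simp only [Pi.add_apply, Pi.smul_apply, smul_eq_mul]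
    linear_combination (-Real.cosh t * P i - Real.sinh t * N i) * hct

/-- The unit normal at `y` pointing towards `p`. -/
noncomputable def unitNormal (p y : ℍ) : Fin 3 → ℝ :=
  (Real.sinh (dist p y))⁻¹ • (toHyperboloid p - Real.cosh (dist p y) • toHyperboloid y)

lemma lorentz_unitNormal_self {p y : ℍ} (h : p ≠ y) :
    lorentz (unitNormal p y) (unitNormal p y) = -1 := by
  have hs : Real.sinh (dist p y) ≠ 0 := (Real.sinh_pos_iff.2 (dist_pos.2 h)).ne'
  have hc := Real.cosh_sq (dist p y)
  simp only [unitNormal, lorentz_sub_right, lorentz_smul_right, lorentz_sub_left,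
    lorentz_smul_left, lorentz_toHyperboloid, dist_self, Real.cosh_zero, dist_comm y p]
  field_simp
  linear_combination -hc

lemma lorentz_toHyperboloid_unitNormal {p y : ℍ} (h : p ≠ y) :
    lorentz (toHyperboloid p) (unitNormal p y) = -Real.sinh (dist p y) := by
  have hs : Real.sinh (dist p y) ≠ 0 := (Real.sinh_pos_iff.2 (dist_pos.2 h)).ne'
  have hc := Real.cosh_sq (dist p y)
  simp only [unitNormal, lorentz_sub_right, lorentz_smul_right,
    lorentz_toHyperboloid, dist_self, Real.cosh_zero]
  field_simp
  linear_combination -hc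

/-- The half-plane bounded by the perpendicular to `[p, y₀]` at `y₀` and containing `y` is at
least as far from `x` as its boundary line. -/
lemma neg_lorentz_unitNormal_le_sinh_dist {p y₀ : ℍ} (h : p ≠ y₀) (x y : ℍ)
    (hy : Real.cosh (dist p y₀) * Real.cosh (dist y y₀) ≤ Real.cosh (dist p y)) :
    -lorentz (toHyperboloid x) (unitNormal p y₀) ≤ Real.sinh (dist x y) := by
  have hs : 0 < Real.sinh (dist p y₀) := Real.sinh_pos_iff.2 (dist_pos.2 h)
  have hq : 0 ≤ lorentz (toHyperboloid y) (unitNormal p y₀) := by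
    simp only [unitNormal, lorentz_sub_right, lorentz_smul_right, lorentz_toHyperboloid,
      dist_comm y p]
    exact mul_nonneg (inv_nonneg.2 hs.le) (sub_nonneg.2 hy)
  have hg := lorentz_gram_nonneg (toHyperboloid x) (toHyperboloid y) (unitNormal p y₀)
  rw [lorentz_toHyperboloid_self, lorentz_toHyperboloid_self, lorentz_unitNormal_self h,
    lorentz_toHyperboloid x y] at hg
  have hc := Real.cosh_sq (dist x y)
  have hc1 := Real.cosh_pos (dist x y)
  have hs0 : 0 ≤ Real.sinh (dist x y) := Real.sinh_nonneg_iff.2 dist_nonneg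
  set a := lorentz (toHyperboloid x) (unitNormal p y₀)
  set b := lorentz (toHyperboloid y) (unitNormal p y₀)
  by_contra! hlt
  have ha : a < 0 := by linarith
  have hab : a * b ≤ 0 := mul_nonpos_of_nonpos_of_nonneg ha.le hq
  have hcab : Real.cosh (dist x y) * (a * b) ≤ 0 := mul_nonpos_of_nonneg_of_nonpos hc1.le hab
  nlinarith [sq_nonneg b]

lemma IsUnitSpeedGeodesicOn.continuousOn {α : ℝ → ℍ} {I : Set ℝ}
    (hα : IsUnitSpeedGeodesicOn α I) : ContinuousOn α I := by
  have : LipschitzOnWith 1 α I := LipschitzOnWith.of_dist_le_mul fun s hs t ht => by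
    simp [hα s hs t ht, Real.dist_eq]
  exact this.continuousOn

/-- At a nearest point of a geodesic segment, the angle is at least a right angle. -/
lemma IsUnitSpeedGeodesicOn.cosh_mul_cosh_le {β : ℝ → ℍ} {S : ℝ} (hS : 0 < S)
    (hβ : IsUnitSpeedGeodesicOn β (Icc 0 S)) {p : ℍ} {s₀ : ℝ} (hs₀ : s₀ ∈ Icc 0 S)
    (hmin : ∀ s ∈ Icc 0 S, dist p (β s₀) ≤ dist p (β s)) {s : ℝ} (hs : s ∈ Icc 0 S) :
    Real.cosh (dist p (β s₀)) * Real.cosh (dist (β s) (β s₀)) ≤ Real.cosh (dist p (β s)) := by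
  obtain ⟨W, -, -, hW⟩ := hβ.exists_velocity hS s₀ hs₀
  set k := lorentz (toHyperboloid p) W
  have hrep : ∀ u ∈ Icc 0 S, Real.cosh (dist p (β u)) =
      Real.cosh (dist p (β s₀)) * Real.cosh (u - s₀) + k * Real.sinh (u - s₀) := by
    intro u hu
    rw [← lorentz_toHyperboloid, hW u hu, lorentz_add_right, lorentz_smul_right,
      lorentz_smul_right, lorentz_toHyperboloid]
    ring
  have hk : 0 ≤ k * (s - s₀) := by
    let g : ℝ → ℝ := fun u =>
      Real.cosh (dist p (β s₀)) * Real.cosh (u - s₀) + k * Real.sinh (u - s₀)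
    have hg : HasDerivAt g k s₀ := by
      have h1 : HasDerivAt (fun u : ℝ => u - s₀) 1 s₀ := (hasDerivAt_id s₀).sub_const s₀
      have := (h1.cosh.const_mul (Real.cosh (dist p (β s₀)))).add (h1.sinh.const_mul k)
      exact this.congr_deriv (by simp)
    have hloc : IsLocalMinOn g (Icc 0 S) s₀ := by
      apply IsMinOn.localize
      intro u hu
      change g s₀ ≤ g u
      simp only [g]
      rw [← hrep u hu, ← hrep s₀ hs₀, Real.cosh_le_cosh, abs_of_nonneg dist_nonneg,
        abs_of_nonneg dist_nonneg]
      exact hmin u hu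
    have := hloc.hasFDerivWithinAt_nonneg hg.hasFDerivAt.hasFDerivWithinAt
      (sub_mem_posTangentConeAt_of_segment_subset ((convex_Icc 0 S).segment_subset hs₀ hs))
    simpa [mul_comm] using this
  have hks : 0 ≤ k * Real.sinh (s - s₀) := by
    rcases lt_trichotomy (s - s₀) 0 with h | h | h
    · have : k ≤ 0 := by by_contra! hk'; nlinarith
      exact mul_nonneg_of_nonpos_of_nonpos this (Real.sinh_neg_iff.2 h).le
    · simp [h]
    · have : 0 ≤ k := by by_contra! hk'; nlinarith
      exact mul_nonneg this (Real.sinh_pos_iff.2 h).le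
  rw [hrep s hs, hβ s hs s₀ hs₀, Real.cosh_abs]
  linarith

/-! ### The one-variable inequality -/

lemma one_add_sq_div_two_le_cosh (x : ℝ) : 1 + x ^ 2 / 2 ≤ Real.cosh x := by
  have h : ∀ y : ℝ, 0 ≤ y → y ^ 2 ≤ Real.sinh y ^ 2 := fun y hy =>
    pow_le_pow_left₀ hy (Real.self_le_sinh_iff.2 hy) 2
  have h1 : (x / 2) ^ 2 ≤ Real.sinh (x / 2) ^ 2 := by
    rcases le_total 0 (x / 2) with h0 | h0
    · exact h _ h0
    · simpa using h (-(x / 2)) (by linarith)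
  have h2 := Real.cosh_two_mul (x / 2)
  rw [mul_div_cancel₀ x two_ne_zero, Real.cosh_sq] at h2
  nlinarith

lemma sinh_sub_sinh_le {a b : ℝ} (ha : 0 ≤ a) (hab : a ≤ b) :
    Real.sinh b - Real.sinh a ≤ Real.cosh b * (b - a) := by
  refine Convex.image_sub_le_mul_sub_of_deriv_le (convex_Icc a b)
    Real.continuous_sinh.continuousOn Real.differentiable_sinh.differentiableOn ?_ a
    (left_mem_Icc.2 hab) b (right_mem_Icc.2 hab) hab
  intro x hx
  rw [interior_Icc] at hx
  rw [Real.deriv_sinh, Real.cosh_le_cosh, abs_of_nonneg (ha.trans hx.1.le),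
    abs_of_nonneg (ha.trans hab)]
  exact hx.2.le

/-- The second-difference inequality when the support function is nonnegative at both ends. -/
lemma le_two_mul_sq_add_sq_sub_sq {r k ε σ τ δ T : ℝ} (hδ : 0 < δ) (hr : δ ≤ r) (hε : 0 < ε)
    (hεT : ε ≤ T) (hk0 : 0 ≤ k) (hk : k ≤ Real.cosh r) (hσ0 : 0 ≤ σ)
    (h1 : Real.sinh σ * Real.cosh τ = Real.sinh r * Real.cosh ε)
    (h2 : Real.cosh σ * Real.sinh τ = k * Real.sinh ε) :
    min (1 / 2) (3 / 2 * δ * (Real.sinh δ / Real.cosh δ) / Real.cosh T) * ε ^ 2 ≤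
      2 * (σ ^ 2 + τ ^ 2 - r ^ 2) := by
  have hr0 : 0 < r := hδ.trans_le hr
  have hshr : 0 < Real.sinh r := Real.sinh_pos_iff.2 hr0
  have hshε : 0 < Real.sinh ε := Real.sinh_pos_iff.2 hε
  have hcσ := Real.cosh_pos σ
  have hcτ := Real.cosh_pos τ
  have hcε := Real.cosh_pos ε
  have hτ0 : 0 ≤ τ := by
    rw [← Real.sinh_nonneg_iff]
    have : 0 ≤ Real.cosh σ * Real.sinh τ := by rw [h2]; positivity
    exact nonneg_of_mul_nonneg_right this hcσ
  have hshσ : 0 ≤ Real.sinh σ := Real.sinh_nonneg_iff.2 hσ0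
  have hτε : τ ≤ ε := by
    by_contra! hlt
    have hs : Real.sinh ε < Real.sinh τ := Real.sinh_lt_sinh.2 hlt
    have e1 := Real.cosh_sq σ
    have e2 := Real.cosh_sq τ
    have e3 := Real.cosh_sq ε
    have e4 := Real.cosh_sq r
    have hs2 : Real.sinh ε ^ 2 < Real.sinh τ ^ 2 := pow_lt_pow_left₀ hs hshε.le two_ne_zero
    have a1 : Real.cosh σ ^ 2 * Real.sinh τ ^ 2 ≤ Real.cosh r ^ 2 * Real.sinh ε ^ 2 := by
      rw [← mul_pow, ← mul_pow, h2]
      gcongr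
    have a2 : Real.sinh σ ^ 2 * Real.cosh τ ^ 2 = Real.sinh r ^ 2 * Real.cosh ε ^ 2 := by
      rw [← mul_pow, ← mul_pow, h1]
    rw [e1, e4] at a1
    rw [e2, e3] at a2
    have hσr : Real.sinh σ ^ 2 < Real.sinh r ^ 2 := by
      by_contra! hc
      nlinarith [mul_le_mul_of_nonneg_right hc (sq_nonneg (Real.sinh τ)),
        mul_pos (pow_pos hshr 2) (sub_pos.2 hs2)]
    nlinarith
  have hm : Real.cosh τ ≤ Real.cosh ε := by
    rw [Real.cosh_le_cosh, abs_of_nonneg hτ0, abs_of_pos hε]; exact hτε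
  have hrσ : r ≤ σ := by
    rw [← Real.sinh_le_sinh]
    by_contra! hc
    nlinarith [mul_lt_mul_of_pos_right hc hcτ, mul_le_mul_of_nonneg_left hm hshr.le]
  have hrσ2 : r ^ 2 ≤ σ ^ 2 := pow_le_pow_left₀ hr0.le hrσ 2
  rcases le_total (ε / 2) τ with hτ | hτ
  · have : (ε / 2) ^ 2 ≤ τ ^ 2 := pow_le_pow_left₀ (by linarith) hτ 2
    calc _ ≤ 1 / 2 * ε ^ 2 := by gcongr; exact min_le_left _ _
      _ ≤ _ := by linarith
  · set th := Real.sinh δ / Real.cosh δ with hth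
    have hth0 : 0 < th := div_pos (Real.sinh_pos_iff.2 hδ) (Real.cosh_pos _)
    have hthσ : th * Real.cosh σ ≤ Real.sinh σ := by
      have : 0 ≤ Real.sinh (σ - δ) := Real.sinh_nonneg_iff.2 (by linarith)
      rw [Real.sinh_sub] at this
      rw [hth, div_mul_eq_mul_div, div_le_iff₀ (Real.cosh_pos _)]
      linarith
    have hcτ2 : Real.cosh τ ≤ Real.cosh (ε / 2) := by
      rw [Real.cosh_le_cosh, abs_of_nonneg hτ0, abs_of_pos (by linarith)]; exact hτ
    have hgap : 3 / 8 * ε ^ 2 ≤ Real.cosh ε - Real.cosh τ := by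
      have b1 := one_add_sq_div_two_le_cosh (ε / 2)
      have b2 := Real.cosh_two_mul (ε / 2)
      rw [mul_div_cancel₀ ε two_ne_zero, Real.sinh_sq] at b2
      nlinarith [Real.one_le_cosh (ε / 2)]
    have hcT : Real.cosh ε ≤ Real.cosh T := by
      rw [Real.cosh_le_cosh, abs_of_pos hε, abs_of_pos (hε.trans_le hεT)]; exact hεT
    have hmv := sinh_sub_sinh_le hr0.le hrσ
    have hsr : 0 ≤ σ - r := sub_nonneg.2 hrσ
    have hlow : th * (3 / 8 * ε ^ 2) ≤ (σ - r) * Real.cosh T := by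
      have c1 : Real.sinh σ * (Real.cosh ε - Real.cosh τ) ≤
          Real.cosh σ * (σ - r) * Real.cosh ε := by
        nlinarith [mul_le_mul_of_nonneg_right hmv hcε.le]
      have c2 : th * Real.cosh σ * (3 / 8 * ε ^ 2) ≤
          Real.sinh σ * (Real.cosh ε - Real.cosh τ) :=
        mul_le_mul hthσ hgap (by positivity) hshσ
      have c3 : Real.cosh σ * (σ - r) * Real.cosh ε ≤ Real.cosh σ * (σ - r) * Real.cosh T := by
        gcongr
      refine le_of_mul_le_mul_left ?_ hcσ
      linarith
    have hcT0 := Real.cosh_pos T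
    have hlow' : th * (3 / 8 * ε ^ 2) / Real.cosh T ≤ σ - r := by
      rwa [div_le_iff₀ hcT0]
    calc _ ≤ 3 / 2 * δ * th / Real.cosh T * ε ^ 2 := by gcongr; exact min_le_right _ _
      _ = 4 * δ * (th * (3 / 8 * ε ^ 2) / Real.cosh T) := by ring
      _ ≤ 4 * δ * (σ - r) := by gcongr
      _ ≤ _ := by nlinarith [sq_nonneg τ, mul_nonneg hsr hsr, mul_nonneg (sub_nonneg.2 hr) hsr]

/-- The case `0 ≤ k` of `le_second_difference_sq`. -/
lemma le_second_difference_sq_of_nonneg {r k ε A B δ T : ℝ} (hδ : 0 < δ) (hr : δ ≤ r)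
    (hε : 0 < ε) (hεT : ε ≤ T) (hk0 : 0 ≤ k) (hk : k ≤ Real.cosh r)
    (hA : Real.sinh r * Real.cosh ε + k * Real.sinh ε ≤ Real.sinh A)
    (hB : Real.sinh r * Real.cosh ε - k * Real.sinh ε ≤ Real.sinh B) :
    min (2 * δ ^ 2 / T ^ 2)
      (min (1 / 2) (3 / 2 * δ * (Real.sinh δ / Real.cosh δ) / Real.cosh T)) * ε ^ 2 ≤
      A ^ 2 + B ^ 2 - 2 * r ^ 2 := by
  have hr0 : 0 < r := hδ.trans_le hr
  have hshr : 0 < Real.sinh r := Real.sinh_pos_iff.2 hr0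
  have hshε : 0 < Real.sinh ε := Real.sinh_pos_iff.2 hε
  have hcε := Real.cosh_pos ε
  rcases le_total 0 (Real.sinh r * Real.cosh ε - k * Real.sinh ε) with hu | hu
  · obtain ⟨a, ha⟩ := Real.sinh_surjective (Real.sinh r * Real.cosh ε + k * Real.sinh ε)
    obtain ⟨b, hb⟩ := Real.sinh_surjective (Real.sinh r * Real.cosh ε - k * Real.sinh ε)
    have ha0 : 0 ≤ a := by rw [← Real.sinh_nonneg_iff, ha]; positivity
    have hb0 : 0 ≤ b := by rw [← Real.sinh_nonneg_iff, hb]; exact hu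
    have haA : a ^ 2 ≤ A ^ 2 := pow_le_pow_left₀ ha0 (Real.sinh_le_sinh.1 (ha.trans_le hA)) 2
    have hbB : b ^ 2 ≤ B ^ 2 := pow_le_pow_left₀ hb0 (Real.sinh_le_sinh.1 (hb.trans_le hB)) 2
    have e1 : Real.sinh a = Real.sinh ((a + b) / 2 + (a - b) / 2) := by congr 1; ring
    have e2 : Real.sinh b = Real.sinh ((a + b) / 2 - (a - b) / 2) := by congr 1; ring
    rw [Real.sinh_add] at e1
    rw [Real.sinh_sub] at e2
    have := le_two_mul_sq_add_sq_sub_sq (σ := (a + b) / 2) (τ := (a - b) / 2) hδ hr hε hεT hk0 hk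
      (by linarith) (by linarith) (by linarith)
    calc _ ≤ _ := mul_le_mul_of_nonneg_right (min_le_right _ _) (sq_nonneg ε)
      _ ≤ _ := this
      _ = a ^ 2 + b ^ 2 - 2 * r ^ 2 := by ring
      _ ≤ _ := by linarith
  · have hrε : r ≤ ε := by
      have : 0 ≤ Real.sinh (ε - r) := by
        rw [Real.sinh_sub]
        nlinarith [mul_le_mul_of_nonneg_right hk hshε.le]
      linarith [Real.sinh_nonneg_iff.1 this]
    have hcr : Real.cosh r ≤ Real.cosh ε := by
      rw [Real.cosh_le_cosh, abs_of_pos hr0, abs_of_pos hε]; exact hrε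
    have hAr : 2 * r ≤ A := by
      rw [← Real.sinh_le_sinh, Real.sinh_two_mul]
      nlinarith [mul_le_mul_of_nonneg_left hcr hshr.le]
    have hA2 : (2 * r) ^ 2 ≤ A ^ 2 := pow_le_pow_left₀ (by linarith) hAr 2
    have hT : 0 < T := hε.trans_le hεT
    have hr2 : δ ^ 2 ≤ r ^ 2 := pow_le_pow_left₀ hδ.le hr 2
    calc _ ≤ 2 * δ ^ 2 / T ^ 2 * T ^ 2 := by gcongr; exact min_le_left _ _
      _ = 2 * δ ^ 2 := by field_simp
      _ ≤ _ := by nlinarith [sq_nonneg B]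

/-- A lower bound for second differences of the square of a function whose hyperbolic sine is
supported from below by a combination of `cosh` and `sinh`. -/
lemma le_second_difference_sq {r k ε A B δ T : ℝ} (hδ : 0 < δ) (hr : δ ≤ r)
    (hε : 0 < ε) (hεT : ε ≤ T) (hk : |k| ≤ Real.cosh r)
    (hA : Real.sinh r * Real.cosh ε + k * Real.sinh ε ≤ Real.sinh A)
    (hB : Real.sinh r * Real.cosh ε - k * Real.sinh ε ≤ Real.sinh B) :
    min (2 * δ ^ 2 / T ^ 2)
      (min (1 / 2) (3 / 2 * δ * (Real.sinh δ / Real.cosh δ) / Real.cosh T)) * ε ^ 2 ≤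
      A ^ 2 + B ^ 2 - 2 * r ^ 2 := by
  rcases le_total 0 k with h | h
  · exact le_second_difference_sq_of_nonneg hδ hr hε hεT h ((le_abs_self k).trans hk) hA hB
  · rw [add_comm (A ^ 2)]
    exact le_second_difference_sq_of_nonneg hδ hr hε hεT (neg_nonneg.2 h)
      ((neg_le_abs k).trans hk) (by linarith) (by linarith)

/-- The distance to a geodesic segment is supported from below, along a geodesic, by the distance
to a line. -/
lemma exists_support {α β : ℝ → ℍ} {T S : ℝ} (hT : 0 < T) (hS : 0 < S)
    (hα : IsUnitSpeedGeodesicOn α (Icc 0 T)) (hβ : IsUnitSpeedGeodesicOn β (Icc 0 S))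
    {t₀ : ℝ} (ht₀ : t₀ ∈ Icc 0 T) (hpos : 0 < infDist (α t₀) (β '' Icc 0 S)) :
    ∃ k : ℝ, |k| ≤ Real.cosh (infDist (α t₀) (β '' Icc 0 S)) ∧ ∀ t ∈ Icc 0 T,
      Real.sinh (infDist (α t₀) (β '' Icc 0 S)) * Real.cosh (t - t₀) + k * Real.sinh (t - t₀) ≤
        Real.sinh (infDist (α t) (β '' Icc 0 S)) := by
  have hK : IsCompact (β '' Icc 0 S) := isCompact_Icc.image_of_continuousOn hβ.continuousOn
  have hne : (β '' Icc 0 S).Nonempty := (nonempty_Icc.2 hS.le).image β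
  obtain ⟨-, ⟨s₀, hs₀, rfl⟩, hd₀⟩ := hK.exists_infDist_eq_dist hne (α t₀)
  obtain ⟨U, hU0, hU, hrep⟩ := hα.exists_velocity hT t₀ ht₀
  have hmin : ∀ s ∈ Icc 0 S, dist (α t₀) (β s₀) ≤ dist (α t₀) (β s) := fun s hs =>
    hd₀ ▸ infDist_le_dist_of_mem (mem_image_of_mem β hs)
  rw [hd₀] at hpos ⊢
  have hpy : α t₀ ≠ β s₀ := dist_pos.1 hpos
  refine ⟨-lorentz U (unitNormal (α t₀) (β s₀)), ?_, ?_⟩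
  · have hg := lorentz_gram_nonneg (toHyperboloid (α t₀)) U (unitNormal (α t₀) (β s₀))
    rw [hU0, hU, lorentz_toHyperboloid_self, lorentz_unitNormal_self hpy,
      lorentz_toHyperboloid_unitNormal hpy] at hg
    rw [abs_neg]
    refine abs_le_of_sq_le_sq ?_ (Real.cosh_pos _).le
    rw [Real.cosh_sq]
    linarith
  · intro t ht
    obtain ⟨-, ⟨s, hs, rfl⟩, hd⟩ := hK.exists_infDist_eq_dist hne (α t)
    rw [hd]
    have := neg_lorentz_unitNormal_le_sinh_dist hpy (α t) (β s) (hβ.cosh_mul_cosh_le hS hs₀ hmin hs)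
    rw [hrep t ht, lorentz_add_left, lorentz_smul_left, lorentz_smul_left,
      lorentz_toHyperboloid_unitNormal hpy] at this
    linarith

theorem stmt_0 (a b c d : ℍ) (α β : ℝ → ℍ) (T S : ℝ)
    (hT : 0 < T) (hS : 0 < S)
    (hα : IsUnitSpeedGeodesicOn α (Icc 0 T)) (hα0 : α 0 = a) (hαT : α T = b)
    (hβ : IsUnitSpeedGeodesicOn β (Icc 0 S)) (hβ0 : β 0 = c) (hβS : β S = d)
    (hdisj : Disjoint (α '' Icc 0 T) (β '' Icc 0 S)) :
    ∃ C > 0, ∀ t ε : ℝ, 0 < ε → t - ε ∈ Icc 0 T → t + ε ∈ Icc 0 T →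
      C * ε ^ 2 ≤ infDist (α (t + ε)) (β '' Icc 0 S) ^ 2
        + infDist (α (t - ε)) (β '' Icc 0 S) ^ 2
        - 2 * infDist (α t) (β '' Icc 0 S) ^ 2 := by
  have hK : IsCompact (β '' Icc 0 S) := isCompact_Icc.image_of_continuousOn hβ.continuousOn
  have hne : (β '' Icc 0 S).Nonempty := (nonempty_Icc.2 hS.le).image β
  obtain ⟨δ, hδ, hδle⟩ : ∃ δ > 0, ∀ t ∈ Icc 0 T, δ ≤ infDist (α t) (β '' Icc 0 S) := by
    obtain ⟨t₁, ht₁, hmin⟩ := isCompact_Icc.exists_isMinOn (nonempty_Icc.2 hT.le)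
      ((continuous_infDist_pt (β '' Icc 0 S)).comp_continuousOn hα.continuousOn)
    refine ⟨_, ?_, fun t ht => hmin ht⟩
    exact (hK.isClosed.notMem_iff_infDist_pos hne).1
      (disjoint_left.1 hdisj (mem_image_of_mem α ht₁))
  refine ⟨min (2 * δ ^ 2 / T ^ 2)
    (min (1 / 2) (3 / 2 * δ * (Real.sinh δ / Real.cosh δ) / Real.cosh T)), ?_, ?_⟩
  · have h1 := Real.sinh_pos_iff.2 hδ
    have h2 := Real.cosh_pos δ
    have h3 := Real.cosh_pos T
    have : 0 < 3 / 2 * δ * (Real.sinh δ / Real.cosh δ) / Real.cosh T := by positivity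
    have : 0 < 2 * δ ^ 2 / T ^ 2 := by positivity
    simp only [gt_iff_lt, lt_min_iff]
    exact ⟨this, by norm_num, by assumption⟩
  · intro t ε hε hm hp
    have ht : t ∈ Icc 0 T := ⟨by linarith [hm.1], by linarith [hp.2]⟩
    obtain ⟨k, hk, hsup⟩ := exists_support hT hS hα hβ ht (hδ.trans_le (hδle t ht))
    have hp' := hsup _ hp
    have hm' := hsup _ hm
    rw [add_sub_cancel_left] at hp'
    rw [sub_sub_cancel_left, Real.cosh_neg, Real.sinh_neg, mul_neg, ← sub_eq_add_neg] at hm'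
    exact le_second_difference_sq hδ (hδle t ht) hε (by linarith [hm.1, hp.2, hm.2, hp.1]) hk
      hp' hm'
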